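/- Let C be a group system. For every t ∈ ℤ and every integer k ≥ 0, Δ_k^t = X_0^t ∩ Y_k^t = β^t(C^{[t,t+k]}); that is, the intersection of the branch images of C^{t+} and C^{(t+k+1)−} equals the branch image of the codewords supported on [t, t+k]. -/

import Mathlib

open scoped Pointwise

namespace GroupSystemPaper

variable {A : ℤ → Type*} [∀ t, Group (A t)]

/-- `C^{t+}` : codewords of the group system `C` that are the identity before time `t`. -/
def Cplus (C : Subgroup (∀ t, A t)) (t : ℤ) : Subgroup C where
  carrier := {a | ∀ n < t, (a : ∀ s, A s) n = 1}
  one_mem' := by intro n hn; simp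
  mul_mem' := by intro a b ha hb n hn; simp [ha n hn, hb n hn]
  inv_mem' := by intro a ha n hn; simp [ha n hn]

/-- `C^{t−}` : codewords of the group system `C` that are the identity from time `t` on. -/
def Cminus (C : Subgroup (∀ t, A t)) (t : ℤ) : Subgroup C where
  carrier := {a | ∀ n, t ≤ n → (a : ∀ s, A s) n = 1}
  one_mem' := by intro n hn; simp
  mul_mem' := by intro a b ha hb n hn; simp [ha n hn, hb n hn]
  inv_mem' := by intro a ha n hn; simp [ha n hn]

/-- `C^{[t₁,t₂]}` : codewords supported on the interval `[t₁, t₂]`. -/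
def Cint (C : Subgroup (∀ t, A t)) (t₁ t₂ : ℤ) : Subgroup C :=
  Cplus C t₁ ⊓ Cminus C (t₂ + 1)

instance Cplus_normal (C : Subgroup (∀ t, A t)) (t : ℤ) : (Cplus C t).Normal := by
  constructor
  intro x hx g n hn
  have h1 : (x : ∀ s, A s) n = 1 := hx n hn
  simp [h1]

instance Cminus_normal (C : Subgroup (∀ t, A t)) (t : ℤ) : (Cminus C t).Normal := by
  constructor
  intro x hx g n hn
  have h1 : (x : ∀ s, A s) n = 1 := hx n hn
  simp [h1]

instance Cint_normal (C : Subgroup (∀ t, A t)) (t₁ t₂ : ℤ) : (Cint C t₁ t₂).Normal := by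
  constructor
  intro x hx g
  rcases Subgroup.mem_inf.mp hx with ⟨h1, h2⟩
  exact Subgroup.mem_inf.mpr
    ⟨(Cplus_normal C t₁).conj_mem _ h1 g, (Cminus_normal C (t₂ + 1)).conj_mem _ h2 g⟩

/-- The normal subgroup `C^{t−}C^{t+}` of `C`. -/
def stateN (C : Subgroup (∀ t, A t)) (t : ℤ) : Subgroup C :=
  Cminus C t ⊔ Cplus C t

instance stateN_normal (C : Subgroup (∀ t, A t)) (t : ℤ) : (stateN C t).Normal :=
  Subgroup.sup_normal _ _

/-- The canonical state space `Σ^t = C/(C^{t−}C^{t+})`. -/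
abbrev State (C : Subgroup (∀ t, A t)) (t : ℤ) : Type _ :=
  ↥C ⧸ stateN C t

/-- The state projection `σ^t : C → Σ^t`. -/
def sigma (C : Subgroup (∀ t, A t)) (t : ℤ) : ↥C →* State C t :=
  QuotientGroup.mk' (stateN C t)

/-- The evaluation homomorphism `χ^t : C → A^t`. -/
def evalHom (C : Subgroup (∀ t, A t)) (t : ℤ) : ↥C →* A t :=
  (Pi.evalMonoidHom A t).comp C.subtype

/-- The branch homomorphism `β^t : C → Σ^t × A^t × Σ^{t+1}`. -/
def beta (C : Subgroup (∀ t, A t)) (t : ℤ) :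
    ↥C →* State C t × A t × State C (t + 1) :=
  (sigma C t).prod ((evalHom C t).prod (sigma C (t + 1)))

/-- The branch group `B^t = β^t(C)`. -/
def Branch (C : Subgroup (∀ t, A t)) (t : ℤ) :
    Subgroup (State C t × A t × State C (t + 1)) :=
  (beta C t).range

/-- `β^t` with codomain restricted to the branch group `B^t`. -/
def betaRes (C : Subgroup (∀ t, A t)) (t : ℤ) : ↥C →* ↥(Branch C t) :=
  (beta C t).rangeRestrict

/-- `X_j^t = β^t(C^{(t−j)+})` as a subgroup of the branch group `B^t`. -/
def X (C : Subgroup (∀ t, A t)) (j t : ℤ) : Subgroup ↥(Branch C t) :=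
  (Cplus C (t - j)).map (betaRes C t)

/-- `Y_i^t = β^t(C^{(t+i+1)−})` as a subgroup of the branch group `B^t`. -/
def Y (C : Subgroup (∀ t, A t)) (i t : ℤ) : Subgroup ↥(Branch C t) :=
  (Cminus C (t + i + 1)).map (betaRes C t)

instance X_normal (C : Subgroup (∀ t, A t)) (j t : ℤ) : (X C j t).Normal :=
  (Cplus_normal C (t - j)).map _ (MonoidHom.rangeRestrict_surjective _)

instance Y_normal (C : Subgroup (∀ t, A t)) (i t : ℤ) : (Y C i t).Normal :=
  (Cminus_normal C (t + i + 1)).map _ (MonoidHom.rangeRestrict_surjective _)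

/-- `Δ_k^t = X_0^t ∩ Y_k^t`. -/
def Del (C : Subgroup (∀ t, A t)) (k t : ℤ) : Subgroup ↥(Branch C t) :=
  X C 0 t ⊓ Y C k t

/-- `D_k^t = {a ∈ C : β^t(a) ∈ Δ_k^t}`. -/
def D (C : Subgroup (∀ t, A t)) (k t : ℤ) : Subgroup ↥C :=
  (Del C k t).comap (betaRes C t)

/-- Following-branch operator: for `S ⊆ B^{t₁}`,
`FSet C t₁ t₂ S = {β^{t₂}(a) : a ∈ C, β^{t₁}(a) ∈ S}`. -/
def FSet (C : Subgroup (∀ t, A t)) (t₁ t₂ : ℤ) (S : Set ↥(Branch C t₁)) :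
    Set ↥(Branch C t₂) :=
  {x | ∃ a : ↥C, betaRes C t₁ a ∈ S ∧ betaRes C t₂ a = x}

/-- `π^{[t,t+k]} : C → B^t × ⋯ × B^{t+k}`, `a ↦ (β^t(a), …, β^{t+k}(a))`. -/
def piSeg (C : Subgroup (∀ t, A t)) (t : ℤ) (k : ℕ) :
    ↥C →* ∀ j : Fin (k + 1), ↥(Branch C (t + ((j : ℕ) : ℤ))) where
  toFun a := fun j => betaRes C (t + ((j : ℕ) : ℤ)) a
  map_one' := by funext j; simp
  map_mul' a b := by funext j; simp

/-- `π^{[t,t+k]}(D_m^t)`. -/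
def Pseg (C : Subgroup (∀ t, A t)) (t : ℤ) (k : ℕ) (m : ℤ) :
    Subgroup (∀ j : Fin (k + 1), ↥(Branch C (t + ((j : ℕ) : ℤ)))) :=
  (D C m t).map (piSeg C t k)

/-- `β^{t+j}(D_m^t)` : the image of `D_m^t` in the branch group at time `t + j`. -/
def Qb (C : Subgroup (∀ t, A t)) (t m j : ℤ) : Subgroup ↥(Branch C (t + j)) :=
  (D C m t).map (betaRes C (t + j))

/-- The normal subgroup `C^{[t,t+k−1]}C^{[t+1,t+k]}` of `C` (denominator of the granule). -/
def granN (C : Subgroup (∀ t, A t)) (t : ℤ) (k : ℕ) : Subgroup ↥C :=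
  Cint C t (t + k - 1) ⊔ Cint C (t + 1) (t + k)

instance granN_normal (C : Subgroup (∀ t, A t)) (t : ℤ) (k : ℕ) : (granN C t k).Normal :=
  Subgroup.sup_normal _ _

lemma mem_D_of_mem_Cint (C : Subgroup (∀ t, A t)) (t : ℤ) (k : ℕ) {a : ↥C}
    (ha : a ∈ Cint C t (t + k)) : a ∈ D C (k : ℤ) t := by
  rcases Subgroup.mem_inf.mp ha with ⟨h1, h2⟩
  refine Subgroup.mem_comap.mpr (Subgroup.mem_inf.mpr ⟨?_, ?_⟩)
  · exact Subgroup.mem_map.mpr ⟨a, by simpa using h1, rfl⟩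
  · exact Subgroup.mem_map.mpr ⟨a, h2, rfl⟩

/-- `ℓ`-controllability of the group system `C`. -/
def Controllable (C : Subgroup (∀ t, A t)) (ℓ : ℕ) : Prop :=
  ∀ a b : ↥C, ∀ t : ℤ, ∃ c : ↥C,
    (∀ n < t, (c : ∀ s, A s) n = (a : ∀ s, A s) n) ∧
    (∀ n, t + (ℓ : ℤ) ≤ n → (c : ∀ s, A s) n = (b : ∀ s, A s) n)

/-!
The kernel of `β^t` is `C^{t−}C^{(t+1)+}`. If `β^t(a) = β^t(b)` with `a ∈ C^{(t−j)+}`,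
`b ∈ C^{(t+i+1)−}` and `i, j ≥ 0`, write `a⁻¹ b = q p` with `q ∈ C^{(t+1)+}` and `p ∈ C^{t−}`: the
codeword `a q = b p⁻¹` is supported on `[t − j, t + i]` and has the same branch as `a`. In lattice
terms this is the Dedekind law, which also yields the kernel. For negative `i` or `j`, one of the
two branch images is trivial.
-/

section Subgroups

variable {G N : Type*} [Group G] [Group N]

lemma sup_inf_assoc_of_normal {H K : Subgroup G} [H.Normal] (L : Subgroup G) (hHK : H ≤ K) :
    (H ⊔ L) ⊓ K = H ⊔ L ⊓ K := by
  apply SetLike.coe_injective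
  rw [Subgroup.coe_inf, Subgroup.normal_mul, Subgroup.normal_mul, Subgroup.mul_inf_assoc H L K hHK]

lemma map_inf_comap (f : G →* N) (H : Subgroup G) (K : Subgroup N) :
    (H ⊓ K.comap f).map f = H.map f ⊓ K :=
  SetLike.coe_injective (Set.image_inter_preimage f H K)

lemma map_inf_of_ker_le (f : G →* N) (H K : Subgroup G) [H.Normal]
    (hker : f.ker ≤ f.ker ⊓ H ⊔ K) : (H ⊓ K).map f = H.map f ⊓ K.map f := by
  refine le_antisymm (Subgroup.map_inf_le H K f) ?_
  calc H.map f ⊓ K.map f = (H ⊓ (K ⊔ f.ker)).map f := by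
        rw [← map_inf_comap, Subgroup.comap_map_eq]
    _ ≤ ((f.ker ⊓ H ⊔ K) ⊓ H).map f :=
        Subgroup.map_mono (le_inf (inf_le_right.trans (sup_le le_sup_right hker)) inf_le_left)
    _ = (f.ker ⊓ H).map f ⊔ (K ⊓ H).map f := by
        rw [sup_inf_assoc_of_normal K inf_le_right, Subgroup.map_sup]
    _ = (H ⊓ K).map f := by
        rw [(Subgroup.map_eq_bot_iff _).mpr inf_le_left, bot_sup_eq, inf_comm]

lemma map_inf_of_left_le_ker (f : G →* N) {H : Subgroup G} (K : Subgroup G) (hH : H ≤ f.ker) :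
    (H ⊓ K).map f = H.map f ⊓ K.map f := by
  rw [(Subgroup.map_eq_bot_iff _).mpr hH, (Subgroup.map_eq_bot_iff _).mpr (inf_le_left.trans hH),
    bot_inf_eq]

end Subgroups

section Branches

variable (C : Subgroup (∀ t, A t))

lemma Cplus_antitone : Antitone (Cplus C) :=
  fun _ _ hst _ ha n hn => ha n (hn.trans_le hst)

lemma Cminus_monotone : Monotone (Cminus C) :=
  fun _ _ hst _ ha n hn => ha n (hst.trans hn)

variable (t : ℤ)

lemma Cplus_succ_le_ker_evalHom : Cplus C (t + 1) ≤ (evalHom C t).ker :=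
  fun _ ha => ha t (lt_add_one t)

lemma Cminus_succ_inf_ker_evalHom : Cminus C (t + 1) ⊓ (evalHom C t).ker = Cminus C t := by
  refine le_antisymm ?_ (le_inf (Cminus_monotone C (le_add_of_nonneg_right zero_le_one))
    fun a ha => ha t le_rfl)
  rintro a ⟨ha, hat⟩ n hn
  rcases hn.eq_or_lt with rfl | htn
  · exact hat
  · exact ha n htn

lemma stateN_succ_inf_ker_evalHom :
    stateN C (t + 1) ⊓ (evalHom C t).ker = Cminus C t ⊔ Cplus C (t + 1) := by
  rw [stateN, sup_comm, sup_inf_assoc_of_normal _ (Cplus_succ_le_ker_evalHom C t),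
    Cminus_succ_inf_ker_evalHom, sup_comm]

lemma ker_betaRes : (betaRes C t).ker = Cminus C t ⊔ Cplus C (t + 1) := by
  have hle : Cminus C t ⊔ Cplus C (t + 1) ≤ stateN C t :=
    sup_le_sup_left (Cplus_antitone C (le_add_of_nonneg_right zero_le_one)) _
  calc (betaRes C t).ker = (beta C t).ker := MonoidHom.ker_rangeRestrict (beta C t)
    _ = stateN C t ⊓ ((evalHom C t).ker ⊓ stateN C (t + 1)) := by
        rw [beta, MonoidHom.ker_prod, MonoidHom.ker_prod,
          sigma, QuotientGroup.ker_mk', sigma, QuotientGroup.ker_mk']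
    _ = Cminus C t ⊔ Cplus C (t + 1) := by
        rw [inf_comm (evalHom C t).ker, stateN_succ_inf_ker_evalHom, inf_eq_right.mpr hle]

lemma Cminus_le_ker_betaRes {s : ℤ} (hst : s ≤ t) : Cminus C s ≤ (betaRes C t).ker :=
  ker_betaRes C t ▸ (Cminus_monotone C hst).trans le_sup_left

lemma Cplus_le_ker_betaRes {s : ℤ} (hts : t < s) : Cplus C s ≤ (betaRes C t).ker :=
  ker_betaRes C t ▸ (Cplus_antitone C hts).trans le_sup_right

lemma ker_betaRes_le_inf_Cplus_sup_Cminus {r s : ℤ} (hr : r ≤ t + 1) (hs : t ≤ s) :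
    (betaRes C t).ker ≤ (betaRes C t).ker ⊓ Cplus C r ⊔ Cminus C s :=
  calc (betaRes C t).ker = Cminus C t ⊔ Cplus C (t + 1) := ker_betaRes C t
    _ ≤ (betaRes C t).ker ⊓ Cplus C r ⊔ Cminus C s :=
      sup_le ((Cminus_monotone C hs).trans le_sup_right)
        (le_sup_of_le_left (le_inf (Cplus_le_ker_betaRes C t (lt_add_one t))
          (Cplus_antitone C hr)))

lemma map_betaRes_Cplus_inf_Cminus (r s : ℤ) :
    (Cplus C r ⊓ Cminus C s).map (betaRes C t) =
      (Cplus C r).map (betaRes C t) ⊓ (Cminus C s).map (betaRes C t) := by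
  rcases lt_or_ge t r with hr | hr
  · exact map_inf_of_left_le_ker _ _ (Cplus_le_ker_betaRes C t hr)
  rcases le_total s t with hs | hs
  · rw [inf_comm, map_inf_of_left_le_ker _ _ (Cminus_le_ker_betaRes C t hs), inf_comm]
  · exact map_inf_of_ker_le _ _ _
      (ker_betaRes_le_inf_Cplus_sup_Cminus C t (hr.trans (lt_add_one t).le) hs)

theorem statement7_general (j i : ℤ) :
    X C j t ⊓ Y C i t = (Cint C (t - j) (t + i)).map (betaRes C t) :=
  (map_betaRes_Cplus_inf_Cminus C t (t - j) (t + i + 1)).symm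

end Branches

/-- For every `t ∈ ℤ` and `k ≥ 0`,
`Δ_k^t = X_0^t ∩ Y_k^t = β^t(C^{[t,t+k]})`. -/
theorem statement7 (C : Subgroup (∀ t, A t)) (t : ℤ) (k : ℕ) :
    X C 0 t ⊓ Y C (k : ℤ) t = (Cint C t (t + (k : ℤ))).map (betaRes C t) := by
  simpa only [sub_zero] using statement7_general C t 0 k

end GroupSystemPaper
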